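/- Let m ≥ r ≥ 3 and 0 ≤ f ≤ C(m,r). If σ_r(m,f) > 0, then there exist x, x̄ ∈ {0,…,m} such that 0 ≤ f − C(x,r) < m and 0 ≤ (C(m,r) − f) − C(x̄,r) < m. -/

import Mathlib

/-! If `e` is not too close to `n.choose r`, take the largest clique with at most `e` edges; fewer
than `n.choose (r - 1)` edges are missing, and by the deletion method they can be supplied outside
the clique by a family in which every `m` vertices span fewer than `m` edges. An induced `m`-vertex
subhypergraph that meets the clique in `x` vertices then has between `x.choose r` and
`x.choose r + m - 1` edges, so only such `f` can be forced for a positive density of `e`. Passing to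
complements exchanges `f` with `m.choose r - f` and `e` with `n.choose r - e`. -/

open Finset
open scoped Classical

/-- `(n,e) →_r (m,f)`: every `r`-uniform hypergraph on `n` vertices with `e` edges
has an induced sub-hypergraph on `m` vertices with exactly `f` edges. -/
def PairArrows (r n e m f : ℕ) : Prop :=
  ∀ G : Finset (Finset (Fin n)), (∀ s ∈ G, s.card = r) → G.card = e →
    ∃ S : Finset (Fin n), S.card = m ∧ (G.filter (fun t => t ⊆ S)).card = f

/-- The density `σ_r(m,f)`. -/
noncomputable def sigmaR (r m f : ℕ) : ℝ :=
  Filter.limsup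
    (fun n : ℕ =>
      (((Finset.range (n.choose r + 1)).filter (fun e => PairArrows r n e m f)).card : ℝ) /
        (n.choose r : ℝ))
    Filter.atTop

open Filter

section Binomial

theorem tendsto_choose_atTop {r : ℕ} (hr : r ≠ 0) :
    Tendsto (fun n : ℕ => n.choose r) atTop atTop := by
  refine tendsto_atTop_atTop_of_monotone (Nat.choose_mono r) fun b => ⟨b + r, ?_⟩
  calc b ≤ (b + 1).choose b := by simp
    _ ≤ (b + r).choose b := Nat.choose_le_choose b (by omega)
    _ = (b + r).choose r := Nat.choose_symm_add

theorem mul_choose_le_choose_succ {a n r : ℕ} (h : a * (r + 1) ≤ n - r) :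
    a * n.choose r ≤ n.choose (r + 1) := by
  refine Nat.le_of_mul_le_mul_right ?_ r.succ_pos
  calc a * n.choose r * (r + 1) = n.choose r * (a * (r + 1)) := by ring
    _ ≤ n.choose r * (n - r) := Nat.mul_le_mul_left _ h
    _ = n.choose (r + 1) * (r + 1) := (Nat.choose_succ_right_eq n r).symm

theorem exists_choose_le_lt_choose_succ {r n e : ℕ} (he : e < n.choose (r + 1)) :
    ∃ k < n, k.choose (r + 1) ≤ e ∧ e < (k + 1).choose (r + 1) := by
  induction n with
  | zero => simp at he
  | succ n ih =>
    rcases lt_or_ge e (n.choose (r + 1)) with hlt | hge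
    · obtain ⟨k, hk, hek⟩ := ih hlt
      exact ⟨k, hk.trans n.lt_succ_self, hek⟩
    · exact ⟨n, n.lt_succ_self, hge, he⟩

theorem exists_choose_add_eq {r n e : ℕ} (he : e < n.choose (r + 1)) :
    ∃ k < n, ∃ j ≤ n.choose r, k.choose (r + 1) + j = e := by
  obtain ⟨k, hkn, hke, hek⟩ := exists_choose_le_lt_choose_succ he
  refine ⟨k, hkn, e - k.choose (r + 1), ?_, by omega⟩
  have hmono : k.choose r ≤ n.choose r := Nat.choose_le_choose r hkn.le
  rw [Nat.choose_succ_succ'] at hek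
  omega

end Binomial

section Deletion

variable {α : Type*}

theorem exists_subset_card_le_add_forall_not_subset {X : Finset α} {Y : Finset (Finset α)}
    (hY : ∀ T ∈ Y, T.Nonempty) :
    ∃ F ⊆ X, (∀ T ∈ Y, ¬ T ⊆ F) ∧ #X ≤ #F + #Y := by
  choose g hg using hY
  let hit : Finset α := Y.attach.image fun T => g T.1 T.2
  have hhit : #hit ≤ #Y := card_image_le.trans_eq card_attach
  refine ⟨X \ hit, sdiff_subset, fun T hT hTX => ?_, ?_⟩
  · exact (mem_sdiff.1 (hTX (hg T hT))).2 (mem_image_of_mem _ (mem_attach Y ⟨T, hT⟩))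
  · have := le_card_sdiff hit X
    omega

section Coloring

variable {β : Type*} [Fintype α] [Fintype β] [DecidableEq β]

theorem card_filter_forall_mem_eq_mul_pow (z : β) (T : Finset α) :
    #{χ : α → β | ∀ t ∈ T, χ t = z} * Fintype.card β ^ #T =
      Fintype.card β ^ Fintype.card α := by
  have hpi : ({χ : α → β | ∀ t ∈ T, χ t = z} : Finset (α → β)) =
      Fintype.piFinset fun a => if a ∈ T then {z} else univ := by
    ext χ
    simp only [mem_filter_univ, Fintype.mem_piFinset]
    exact forall_congr' fun a => by split_ifs with ha <;> simp [ha]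
  calc #{χ : α → β | ∀ t ∈ T, χ t = z} * Fintype.card β ^ #T
      = ∏ a, (if a ∈ T then 1 else Fintype.card β) * if a ∈ T then Fintype.card β else 1 := by
        rw [hpi, Fintype.card_piFinset, prod_mul_distrib, prod_ite_mem, univ_inter, prod_const]
        congr 1
        exact prod_congr rfl fun a _ => by split_ifs <;> simp
    _ = ∏ _a : α, Fintype.card β := prod_congr rfl fun a _ => by split_ifs <;> simp
    _ = Fintype.card β ^ Fintype.card α := by simp

theorem sum_card_filter_forall_mem_eq_mul_pow {ι : Type*} {k : ℕ} (z : β) {B : Finset ι}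
    {T : ι → Finset α} (hT : ∀ i ∈ B, #(T i) = k) :
    (∑ χ : α → β, #{i ∈ B | ∀ t ∈ T i, χ t = z}) * Fintype.card β ^ k =
      #B * Fintype.card β ^ Fintype.card α := by
  calc (∑ χ : α → β, #{i ∈ B | ∀ t ∈ T i, χ t = z}) * Fintype.card β ^ k
      = ∑ i ∈ B, #{χ : α → β | ∀ t ∈ T i, χ t = z} * Fintype.card β ^ k := by
        simp only [card_filter]
        rw [sum_comm, sum_mul]
    _ = ∑ _i ∈ B, Fintype.card β ^ Fintype.card α :=
        sum_congr rfl fun i hi => by rw [← hT i hi, card_filter_forall_mem_eq_mul_pow]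
    _ = #B * Fintype.card β ^ Fintype.card α := by simp

theorem sum_card_filter_eq_mul (z : β) (E : Finset α) :
    (∑ χ : α → β, #{a ∈ E | χ a = z}) * Fintype.card β =
      #E * Fintype.card β ^ Fintype.card α := by
  simpa using sum_card_filter_forall_mem_eq_mul_pow z (B := E) (T := singleton)
    fun a _ => card_singleton a

-- Divided by `q ^ (k + 1)`, where `q` is the number of colours, this is the deletion method's
-- first-moment bound for the class of colour `z` under a uniformly random colouring.
theorem exists_coloring_card_mul_pow_add_le {k : ℕ} (z : β) (E : Finset α)
    {B : Finset (Finset α)} (hB : (B : Set (Finset α)).Sized k) :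
    ∃ χ : α → β,
      #E * Fintype.card β ^ k +
          #{T ∈ B | ∀ t ∈ T, χ t = z} * Fintype.card β ^ k * Fintype.card β ≤
        #{a ∈ E | χ a = z} * Fintype.card β * Fintype.card β ^ k + #B * Fintype.card β := by
  have : Nonempty (α → β) := ⟨fun _ => z⟩
  suffices h : ∑ χ : α → β, (#E * Fintype.card β ^ k +
        #{T ∈ B | ∀ t ∈ T, χ t = z} * Fintype.card β ^ k * Fintype.card β) ≤
      ∑ χ : α → β, (#{a ∈ E | χ a = z} * Fintype.card β * Fintype.card β ^ k +
        #B * Fintype.card β) by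
    obtain ⟨χ, -, hχ⟩ := exists_le_of_sum_le univ_nonempty h
    exact ⟨χ, hχ⟩
  simp only [sum_add_distrib, ← sum_mul, sum_card_filter_forall_mem_eq_mul_pow z hB,
    sum_card_filter_eq_mul z E, sum_const, card_univ, Fintype.card_fun, smul_eq_mul]
  exact le_of_eq (by ring)

end Coloring

theorem exists_subset_forall_not_subset_card_mul_pow_le [Finite α] {k q : ℕ}
    (hk : k ≠ 0) (hq : q ≠ 0) (E : Finset α) {B : Finset (Finset α)}
    (hB : (B : Set (Finset α)).Sized k) :
    ∃ F ⊆ E, (∀ T ∈ B, ¬ T ⊆ F) ∧ #E * q ^ k ≤ (#F * q ^ k + #B) * q := by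
  have := Fintype.ofFinite α
  have : NeZero q := ⟨hq⟩
  obtain ⟨χ, hχ⟩ := exists_coloring_card_mul_pow_add_le (0 : Fin q) E hB
  obtain ⟨F, hFX, hF, hcard⟩ := exists_subset_card_le_add_forall_not_subset
    (X := {a ∈ E | χ a = 0}) (Y := {T ∈ B | ∀ t ∈ T, χ t = 0}) fun T hT =>
      card_ne_zero.1 ((hB (mem_filter.1 hT).1).trans_ne hk)
  refine ⟨F, hFX.trans (filter_subset _ _), fun T hT hTF => ?_, ?_⟩
  · exact hF T (mem_filter.2 ⟨hT, fun t ht => (mem_filter.1 (hFX (hTF ht))).2⟩) hTF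
  · rw [Fintype.card_fin] at hχ
    linarith [Nat.mul_le_mul_right (q ^ k * q) hcard]

end Deletion

section Sparse

variable {V : Type*} [DecidableEq V]

/-- `(v, k)`-freeness in the sense of Brown, Erdős and Sós: any `v` vertices span fewer than `k`
edges of `F`. These are the edges added to a clique without visibly changing the `v`-vertex
induced subhypergraphs. -/
def IsSparse (v k : ℕ) (F : Finset (Finset V)) : Prop :=
  ∀ S : Finset V, #S = v → #{t ∈ F | t ⊆ S} < k

theorem IsSparse.mono {v k : ℕ} {F F' : Finset (Finset V)} (hF : IsSparse v k F) (h : F' ⊆ F) :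
    IsSparse v k F' := fun S hS =>
  (card_le_card (filter_subset_filter _ h)).trans_lt (hF S hS)

variable [Fintype V]

/-- The sets of `k` edges of size `r` spanned by some `v` vertices: the configurations that an
`r`-uniform family has to avoid in order to be `IsSparse v k`. -/
def denseConfigurations (V : Type*) [DecidableEq V] [Fintype V] (r v k : ℕ) :
    Finset (Finset (Finset V)) :=
  (powersetCard v univ).biUnion fun S => powersetCard k (powersetCard r S)

theorem sized_denseConfigurations (r v k : ℕ) :
    (denseConfigurations V r v k : Set (Finset (Finset V))).Sized k := by
  intro T hT
  obtain ⟨S, -, hTS⟩ := mem_biUnion.1 hT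
  exact (mem_powersetCard.1 hTS).2

theorem card_denseConfigurations_le (r v k : ℕ) :
    #(denseConfigurations V r v k) ≤ Fintype.card V ^ v * (v.choose r).choose k := by
  refine (card_biUnion_le_card_mul _ _ ((v.choose r).choose k) fun S hS => ?_).trans ?_
  · rw [card_powersetCard, card_powersetCard, (mem_powersetCard.1 hS).2]
  · rw [card_powersetCard, card_univ]
    exact Nat.mul_le_mul_right _ (Nat.choose_le_pow _ v)

theorem isSparse_of_forall_not_subset {r v k : ℕ} {F : Finset (Finset V)}
    (hFr : (F : Set (Finset V)).Sized r) (hF : ∀ T ∈ denseConfigurations V r v k, ¬ T ⊆ F) :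
    IsSparse v k F := by
  intro S hS
  by_contra! hk
  obtain ⟨T, hT, hTk⟩ := exists_subset_card_eq hk
  have hTF : T ⊆ F := hT.trans (filter_subset _ _)
  refine hF T (mem_biUnion.2 ⟨S, by simp [hS], ?_⟩) hTF
  exact mem_powersetCard.2 ⟨fun t ht =>
    mem_powersetCard.2 ⟨(mem_filter.1 (hT ht)).2, hFr (hTF ht)⟩, hTk⟩

theorem exists_isSparse_subset_card_mul_pow_le {r k q : ℕ} (v : ℕ) (hk : k ≠ 0) (hq : q ≠ 0)
    {E : Finset (Finset V)} (hE : (E : Set (Finset V)).Sized r) :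
    ∃ F ⊆ E, IsSparse v k F ∧
      #E * q ^ k ≤ (#F * q ^ k + Fintype.card V ^ v * (v.choose r).choose k) * q := by
  obtain ⟨F, hFE, hF, hcard⟩ := exists_subset_forall_not_subset_card_mul_pow_le hk hq E
    (sized_denseConfigurations r v k)
  refine ⟨F, hFE, isSparse_of_forall_not_subset (hE.mono (coe_subset.2 hFE)) hF, hcard.trans ?_⟩
  gcongr
  exact card_denseConfigurations_le r v k

theorem eventually_exists_isSparse_subset_choose_le_card {r D m : ℕ} (hr : r ≠ 0) (hD : D ≠ 0)
    (hm : m ≠ 0) :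
    ∀ᶠ n in atTop, ∀ E : Finset (Finset (Fin n)), (E : Set (Finset (Fin n))).Sized (r + 1) →
      n.choose (r + 1) ≤ D * #E → ∃ F ⊆ E, IsSparse m m F ∧ n.choose r ≤ #F := by
  let L := (r + 1) * D
  let c := (m.choose (r + 1)).choose m
  have hL : r + 1 ≤ L := Nat.le_mul_of_pos_right _ (Nat.pos_of_ne_zero hD)
  filter_upwards [eventually_ge_atTop (4 * L),
    (tendsto_choose_atTop hr).eventually_ge_atTop ((8 * L) ^ m * c)] with n hn hbig E hE hdense
  -- Edges are kept with probability `1 / q` of order `1 / n`: at least `2 * n.choose r` of them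
  -- survive on average, whereas the average number of surviving dense configurations is bounded.
  obtain ⟨q, hqn, hnq⟩ : ∃ q, 4 * L * q ≤ n ∧ n < 4 * L * (q + 1) :=
    ⟨n / (4 * L), Nat.mul_div_le _ _, Nat.lt_mul_div_succ _ (by omega)⟩
  have hq : q ≠ 0 := by rintro rfl; omega
  have hn_le : n ≤ 8 * L * q := by nlinarith [Nat.pos_of_ne_zero hq]
  have hE_card : 2 * q * n.choose r ≤ #E := by
    refine Nat.le_of_mul_le_mul_left (hdense.trans' ?_) (Nat.pos_of_ne_zero hD)
    have hqr : 2 * D * q * (r + 1) ≤ n - r := by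
      have : 2 * (2 * D * q * (r + 1)) = 4 * L * q := by ring
      omega
    calc D * (2 * q * n.choose r) = 2 * D * q * n.choose r := by ring
      _ ≤ n.choose (r + 1) := mul_choose_le_choose_succ hqr
  obtain ⟨F, hFE, hF, hF_card⟩ := exists_isSparse_subset_card_mul_pow_le m hm hq hE
  refine ⟨F, hFE, hF, ?_⟩
  have hscaled : 2 * n.choose r * (q ^ m * q) ≤ (#F + (8 * L) ^ m * c) * (q ^ m * q) := by
    calc 2 * n.choose r * (q ^ m * q) = 2 * q * n.choose r * q ^ m := by ring
      _ ≤ #E * q ^ m := by gcongr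
      _ ≤ (#F * q ^ m + n ^ m * c) * q := by rwa [Fintype.card_fin] at hF_card
      _ ≤ (#F * q ^ m + (8 * L * q) ^ m * c) * q := by gcongr
      _ = (#F + (8 * L) ^ m * c) * (q ^ m * q) := by rw [mul_pow]; ring
  have := Nat.le_of_mul_le_mul_right hscaled (by positivity)
  omega

end Sparse

section Arrows

/-- `f` exceeds one of the binomial coefficients `x.choose r` with `x ≤ m` by less than `m`: the
condition on `f` that a clique plus a sparse family imposes. -/
def NearBinomial (r m f : ℕ) : Prop :=
  ∃ x ≤ m, x.choose r ≤ f ∧ f < x.choose r + m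

theorem filter_subset_powersetCard {V : Type*} [DecidableEq V] (r : ℕ) (A S : Finset V) :
    {t ∈ powersetCard r A | t ⊆ S} = powersetCard r (A ∩ S) := by
  ext t
  simp only [mem_filter, mem_powersetCard, subset_inter_iff]
  tauto

variable {r n e m f : ℕ}

theorem PairArrows.nearBinomial {A : Finset (Fin n)} {F : Finset (Finset (Fin n))}
    (h : PairArrows r n ((#A).choose r + #F) m f)
    (hFA : F ⊆ powersetCard r univ \ powersetCard r A) (hF : IsSparse m m F) :
    NearBinomial r m f := by
  have hdisj : Disjoint (powersetCard r A) F := disjoint_sdiff.mono_right hFA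
  have hsized : ∀ s ∈ powersetCard r A ∪ F, #s = r := by
    intro s hs
    rcases mem_union.1 hs with hsA | hsF
    · exact (mem_powersetCard.1 hsA).2
    · exact (mem_powersetCard.1 (mem_sdiff.1 (hFA hsF)).1).2
  obtain ⟨S, hS, hSf⟩ := h (powersetCard r A ∪ F) hsized
    (by rw [card_union_of_disjoint hdisj, card_powersetCard])
  rw [filter_union, card_union_of_disjoint (disjoint_filter_filter hdisj),
    filter_subset_powersetCard, card_powersetCard] at hSf
  have hFS := hF S hS
  exact ⟨#(A ∩ S), hS ▸ card_le_card inter_subset_right, by omega, by omega⟩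

theorem PairArrows.compl (he : e ≤ n.choose r) (h : PairArrows r n e m f) :
    PairArrows r n (n.choose r - e) m (m.choose r - f) := by
  intro G hG hGe
  have hGr : G ⊆ powersetCard r univ := Set.Sized.subset_powersetCard_univ hG
  obtain ⟨S, hS, hSf⟩ := h (powersetCard r univ \ G)
    (fun s hs => (mem_powersetCard.1 (mem_sdiff.1 hs).1).2)
    (by rw [card_sdiff_of_subset hGr, hGe, card_powersetCard, card_fin, Nat.sub_sub_self he])
  refine ⟨S, hS, ?_⟩
  have hsplit : #{t ∈ powersetCard r univ \ G | t ⊆ S} + #{t ∈ G | t ⊆ S} = m.choose r := by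
    rw [← card_union_of_disjoint (disjoint_filter_filter sdiff_disjoint), ← filter_union,
      sdiff_union_of_subset hGr, filter_subset_powersetCard, univ_inter, card_powersetCard, hS]
  omega

theorem eventually_nearBinomial_of_pairArrows {D : ℕ} (hr : 2 ≤ r) (hD : D ≠ 0) (hm : m ≠ 0) :
    ∀ᶠ n in atTop, ∀ e, n.choose r ≤ D * (n.choose r - e) → PairArrows r n e m f →
      NearBinomial r m f := by
  obtain ⟨r, rfl⟩ : ∃ s, r = s + 1 := ⟨r - 1, by omega⟩
  filter_upwards [eventually_ge_atTop (r + 1),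
    eventually_exists_isSparse_subset_choose_le_card (by omega : r ≠ 0) hD hm]
    with n hn hsparse e hgap harrows
  have he : e < n.choose (r + 1) := by
    have hpos : 0 < n.choose (r + 1) := Nat.choose_pos hn
    have := Nat.pos_of_mul_pos_left (hpos.trans_le hgap)
    omega
  obtain ⟨k, hkn, j, hj, rfl⟩ := exists_choose_add_eq he
  obtain ⟨A, -, rfl⟩ := exists_subset_card_eq (s := (univ : Finset (Fin n)))
    (hkn.le.trans_eq (card_fin n).symm)
  have hcompl_sized : ((powersetCard (r + 1) univ \ powersetCard (r + 1) A :
      Finset (Finset (Fin n))) : Set (Finset (Fin n))).Sized (r + 1) :=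
    (Set.sized_powersetCard _ _).mono (coe_subset.2 sdiff_subset)
  have hcompl_dense :
      n.choose (r + 1) ≤ D * #(powersetCard (r + 1) univ \ powersetCard (r + 1) A) := by
    rw [card_sdiff_of_subset (powersetCard_mono (subset_univ A)), card_powersetCard,
      card_powersetCard, card_fin]
    exact hgap.trans (Nat.mul_le_mul_left D (by omega))
  obtain ⟨F₀, hF₀A, hF₀, hjF₀⟩ := hsparse _ hcompl_sized hcompl_dense
  obtain ⟨F, hFF₀, rfl⟩ := exists_subset_card_eq (hj.trans hjF₀)
  exact harrows.nearBinomial (hFF₀.trans hF₀A) (hF₀.mono hFF₀)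

end Arrows

section Density

theorem exists_mem_le_mul_sub {s : Finset ℕ} {N D : ℕ} (hs : ∀ e ∈ s, e ≤ N) (hD : D ≠ 0)
    (hcard : N / D + 1 < #s) : ∃ e ∈ s, N ≤ D * (N - e) := by
  have htop : #(Icc (N - N / D) N) < #s := by
    rwa [Nat.card_Icc, Nat.succ_sub (Nat.sub_le _ _), Nat.sub_sub_self (Nat.div_le_self N D)]
  obtain ⟨e, hes, he⟩ := exists_mem_notMem_of_card_lt_card htop
  have hlt : e < N - N / D := not_le.1 fun hle => he (mem_Icc.2 ⟨hle, hs e hes⟩)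
  refine ⟨e, hes, le_of_lt ?_⟩
  rwa [mul_comm, ← Nat.div_lt_iff_lt_mul (Nat.pos_of_ne_zero hD), lt_tsub_comm]

variable {r n m f : ℕ}

/-- The edge counts `e` with `(n, e) →_r (m, f)`, restricted to `e ≤ n.choose r` because larger `e`
satisfy `PairArrows` vacuously. Their density is what `sigmaR` measures. -/
noncomputable def arrowingEdgeCounts (r n m f : ℕ) : Finset ℕ :=
  {e ∈ range (n.choose r + 1) | PairArrows r n e m f}

theorem mem_arrowingEdgeCounts {e : ℕ} :
    e ∈ arrowingEdgeCounts r n m f ↔ e ≤ n.choose r ∧ PairArrows r n e m f := by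
  rw [arrowingEdgeCounts, mem_filter, mem_range_succ_iff]

theorem sigmaR_eq_limsup (r m f : ℕ) :
    sigmaR r m f =
      limsup (fun n => (#(arrowingEdgeCounts r n m f) : ℝ) / n.choose r) atTop :=
  rfl

theorem isCoboundedUnder_card_arrowingEdgeCounts_div (r m f : ℕ) :
    atTop.IsCoboundedUnder (· ≤ ·)
      fun n => (#(arrowingEdgeCounts r n m f) : ℝ) / n.choose r :=
  isCoboundedUnder_le_of_le _ (x := 0) fun _ => by positivity

theorem isBoundedUnder_card_arrowingEdgeCounts_div (r m f : ℕ) :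
    atTop.IsBoundedUnder (· ≤ ·)
      fun n => (#(arrowingEdgeCounts r n m f) : ℝ) / n.choose r := by
  refine isBoundedUnder_of ⟨2, fun n => ?_⟩
  have hcard : #(arrowingEdgeCounts r n m f) ≤ n.choose r + 1 :=
    (card_filter_le _ _).trans_eq (card_range _)
  rcases Nat.eq_zero_or_pos (n.choose r) with hzero | hpos
  · simp [hzero]
  · rw [div_le_iff₀ (by exact_mod_cast hpos)]
    exact_mod_cast (by omega : #(arrowingEdgeCounts r n m f) ≤ 2 * n.choose r)

theorem card_arrowingEdgeCounts_le_compl (r n m f : ℕ) :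
    #(arrowingEdgeCounts r n m f) ≤ #(arrowingEdgeCounts r n m (m.choose r - f)) := by
  refine card_le_card_of_injOn (n.choose r - ·) (fun e he => ?_) fun a ha b hb hab => ?_
  · obtain ⟨hle, harrows⟩ := mem_arrowingEdgeCounts.1 he
    exact mem_arrowingEdgeCounts.2 ⟨Nat.sub_le _ _, harrows.compl hle⟩
  · have hale := (mem_arrowingEdgeCounts.1 ha).1
    have hble := (mem_arrowingEdgeCounts.1 hb).1
    simp only at hab
    omega

theorem sigmaR_le_sigmaR_compl (r m f : ℕ) : sigmaR r m f ≤ sigmaR r m (m.choose r - f) := by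
  rw [sigmaR_eq_limsup, sigmaR_eq_limsup]
  refine limsup_le_limsup (Eventually.of_forall fun n => ?_)
    (isCoboundedUnder_card_arrowingEdgeCounts_div r m f)
    (isBoundedUnder_card_arrowingEdgeCounts_div r m _)
  have hcard := card_arrowingEdgeCounts_le_compl r n m f
  exact div_le_div_of_nonneg_right (by exact_mod_cast hcard) (Nat.cast_nonneg _)

theorem frequently_exists_pairArrows_of_sigmaR_pos (hr : r ≠ 0) (h : 0 < sigmaR r m f) :
    ∃ D ≠ 0, ∃ᶠ n in atTop, ∃ e, n.choose r ≤ D * (n.choose r - e) ∧ PairArrows r n e m f := by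
  obtain ⟨ε, hε, hεσ⟩ := exists_between h
  obtain ⟨D, hεD⟩ := exists_nat_gt (2 / ε)
  have hD : (0 : ℝ) < D := hεD.trans' (by positivity)
  refine ⟨D, by exact_mod_cast hD.ne', ?_⟩
  have hfreq := frequently_lt_of_lt_limsup (isCoboundedUnder_card_arrowingEdgeCounts_div r m f) hεσ
  refine (hfreq.and_eventually ((tendsto_choose_atTop hr).eventually_ge_atTop D)).mono ?_
  rintro n ⟨hεn, hDn⟩
  have hDn' : (D : ℝ) ≤ n.choose r := by exact_mod_cast hDn
  have hcard : n.choose r / D + 1 < #(arrowingEdgeCounts r n m f) := by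
    rw [← Nat.cast_lt (α := ℝ)]
    calc ((n.choose r / D + 1 : ℕ) : ℝ) ≤ n.choose r / D + n.choose r / D := by
          push_cast
          exact add_le_add Nat.cast_div_le ((one_le_div₀ hD).2 hDn')
      _ = 2 / D * n.choose r := by ring
      _ ≤ ε * n.choose r := by
          gcongr
          exact ((div_lt_comm₀ hε hD).1 hεD).le
      _ < #(arrowingEdgeCounts r n m f) := (lt_div_iff₀ (hD.trans_le hDn')).1 hεn
  obtain ⟨e, he, hgap⟩ := exists_mem_le_mul_sub
    (fun e he => (mem_arrowingEdgeCounts.1 he).1) (by exact_mod_cast hD.ne') hcard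
  exact ⟨e, hgap, (mem_arrowingEdgeCounts.1 he).2⟩

theorem nearBinomial_of_sigmaR_pos (hr : 2 ≤ r) (hm : m ≠ 0) (h : 0 < sigmaR r m f) :
    NearBinomial r m f := by
  obtain ⟨D, hD, hfreq⟩ := frequently_exists_pairArrows_of_sigmaR_pos (by omega) h
  obtain ⟨n, ⟨e, hgap, harrows⟩, hnear⟩ :=
    (hfreq.and_eventually (eventually_nearBinomial_of_pairArrows hr hD hm)).exists
  exact hnear e hgap harrows

end Density

theorem exists_binomials_near_of_sigma_pos_general (r m f : ℕ) (hr : 2 ≤ r) (hm : 0 < m)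
    (h : 0 < sigmaR r m f) :
    ∃ x ≤ m, ∃ xbar ≤ m,
      x.choose r ≤ f ∧ f < x.choose r + m ∧
      xbar.choose r ≤ m.choose r - f ∧ m.choose r - f < xbar.choose r + m := by
  obtain ⟨x, hxm, hx⟩ := nearBinomial_of_sigmaR_pos hr hm.ne' h
  obtain ⟨y, hym, hy⟩ :=
    nearBinomial_of_sigmaR_pos hr hm.ne' (h.trans_le (sigmaR_le_sigmaR_compl r m f))
  exact ⟨x, hxm, y, hym, hx.1, hx.2, hy⟩

theorem exists_binomials_near_of_sigma_pos (r m f : ℕ) (hr : 3 ≤ r) (hm : r ≤ m)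
    (hf : f ≤ m.choose r) (h : 0 < sigmaR r m f) :
    ∃ x ≤ m, ∃ xbar ≤ m,
      x.choose r ≤ f ∧ f < x.choose r + m ∧
      xbar.choose r ≤ m.choose r - f ∧ m.choose r - f < xbar.choose r + m :=
  exists_binomials_near_of_sigma_pos_general r m f (by omega) (by omega) h
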